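/- arXiv:1704.02862 — 4 statements merged into one kernel-verified Lean document; each statement's English description precedes it below -/
import Mathlib

section
/- Let E be a real normed vector space, k a natural number, f : E × E → ℝ a C^k function vanishing on the diagonal, and ζ₁, …, ζ_k : E × E → E × E vector fields, each of class C^k and each tangent to the diagonal along the diagonal (the two components of ζᵢ(x,x) are equal for every x). Then the iterated Lie derivative θ(ζ_k)⋯θ(ζ₁)f, defined recursively by θ(ζ)g : p ↦ (fderiv g p)(ζ p), vanishes on the diagonal. -/
/-- The Lie derivative of a function along a vector field: `θ(ζ)g : p ↦ (fderiv g p)(ζ p)`. -/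
noncomputable def lieDerivFun {E : Type*} [NormedAddCommGroup E] [NormedSpace ℝ E]
    (ζ : E × E → E × E) (g : E × E → ℝ) : E × E → ℝ :=
  fun p => fderiv ℝ g p (ζ p)

/-- The iterated Lie derivative `θ(ζ_k)⋯θ(ζ₁)f`. -/
noncomputable def iterLieDeriv {E : Type*} [NormedAddCommGroup E] [NormedSpace ℝ E] :
    (k : ℕ) → (ζ : Fin k → (E × E → E × E)) → (f : E × E → ℝ) → (E × E → ℝ)
  | 0, _, f => f
  | (k + 1), ζ, f =>
      lieDerivFun (ζ (Fin.last k)) (iterLieDeriv k (fun i => ζ i.castSucc) f)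

theorem iterLieDeriv_aux
    {E : Type*} [NormedAddCommGroup E] [NormedSpace ℝ E]
    (f : E × E → ℝ) (hf0 : ∀ x : E, f (x, x) = 0) (k : ℕ) :
    ∀ (m : ℕ) (_ : ContDiff ℝ ((k + m : ℕ) : WithTop ℕ∞) f)
      (ζ : Fin k → (E × E → E × E))
      (_ : ∀ i, ContDiff ℝ ((k + m : ℕ) : WithTop ℕ∞) (ζ i))
      (_ : ∀ i, ∀ x : E, ((ζ i) (x, x)).1 = ((ζ i) (x, x)).2),
      ContDiff ℝ (m : WithTop ℕ∞) (iterLieDeriv k ζ f) ∧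
        ∀ x : E, iterLieDeriv k ζ f (x, x) = 0 := by
  induction k with
  | zero =>
    intro m hf ζ _ _
    refine ⟨?_, hf0⟩
    rw [Nat.zero_add] at hf
    exact hf
  | succ k ih =>
    intro m hf ζ hζ hd
    have e : k + 1 + m = k + (m + 1) := by omega
    obtain ⟨h1, h2⟩ := ih (m + 1) (e ▸ hf) (fun i => ζ i.castSucc)
      (fun i => e ▸ hζ i.castSucc) (fun i => hd i.castSucc)
    have h1' : ContDiff ℝ ((m : WithTop ℕ∞) + 1) (iterLieDeriv k (fun i => ζ i.castSucc) f) := by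
      exact_mod_cast h1
    refine ⟨?_, ?_⟩
    · have hz : ContDiff ℝ (m : WithTop ℕ∞) (ζ (Fin.last k)) :=
        (hζ (Fin.last k)).of_le (by exact_mod_cast (by omega : m ≤ k + 1 + m))
      exact (h1'.fderiv_right le_rfl).clm_apply hz
    · intro x
      have hdiff : DifferentiableAt ℝ (iterLieDeriv k (fun i => ζ i.castSucc) f) (x, x) :=
        h1'.differentiable (by simp) _
      have hδ : HasFDerivAt (fun y : E => (y, y))
          ((ContinuousLinearMap.id ℝ E).prod (ContinuousLinearMap.id ℝ E)) x :=
        (hasFDerivAt_id x).prodMk (hasFDerivAt_id x)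
      have hc := HasFDerivAt.comp (f := fun y : E => (y, y)) x hdiff.hasFDerivAt hδ
      have h0 : (iterLieDeriv k (fun i => ζ i.castSucc) f) ∘ (fun y : E => (y, y))
          = fun _ => (0 : ℝ) := funext h2
      rw [h0] at hc
      have hu := hc.unique (hasFDerivAt_const (0 : ℝ) x)
      have hv := congrArg (fun L => L (ζ (Fin.last k) (x, x)).1) hu
      have hp : ζ (Fin.last k) (x, x)
          = ((ζ (Fin.last k) (x, x)).1, (ζ (Fin.last k) (x, x)).1) :=
        Prod.ext rfl (hd (Fin.last k) x).symm
      change fderiv ℝ (iterLieDeriv k (fun i => ζ i.castSucc) f) (x, x)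
        (ζ (Fin.last k) (x, x)) = 0
      rw [hp]
      exact hv

theorem iterLieDeriv_vanishes_on_diagonal
    {E : Type*} [NormedAddCommGroup E] [NormedSpace ℝ E]
    (k : ℕ) (f : E × E → ℝ) (hf : ContDiff ℝ k f)
    (hf0 : ∀ x : E, f (x, x) = 0)
    (ζ : Fin k → (E × E → E × E))
    (hζ : ∀ i, ContDiff ℝ k (ζ i))
    (hζdiag : ∀ i, ∀ x : E, ((ζ i) (x, x)).1 = ((ζ i) (x, x)).2) :
    ∀ x : E, iterLieDeriv k ζ f (x, x) = 0 := by
  exact (iterLieDeriv_aux f hf0 k 0 hf ζ hζ hζdiag).2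
end

section
/- Let E be a real normed vector space and let ζ, ζ' : E × E → E × E be differentiable vector fields on E × E, both tangent to the diagonal along the diagonal (for every x ∈ E, the two components of ζ(x,x) are equal, and likewise for ζ'). Then their Lie bracket [ζ,ζ'] is also tangent to the diagonal along the diagonal: for every x ∈ E, the two components of [ζ,ζ'](x,x) are equal. -/
theorem fderiv_diag_aux
    {E : Type*} [NormedAddCommGroup E] [NormedSpace ℝ E]
    (f : E × E → E × E) (hf : Differentiable ℝ f)
    (hd : ∀ x : E, (f (x, x)).1 = (f (x, x)).2) (x : E) (w : E × E) (hw : w.1 = w.2) :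
    (fderiv ℝ f (x, x) w).1 = (fderiv ℝ f (x, x) w).2 := by
  obtain ⟨v, v'⟩ := w
  obtain rfl : v = v' := hw
  have hδ : HasFDerivAt (fun y : E => (y, y))
      ((ContinuousLinearMap.id ℝ E).prod (ContinuousLinearMap.id ℝ E)) x :=
    (hasFDerivAt_id x).prodMk (hasFDerivAt_id x)
  have h : HasFDerivAt (fun y : E => f (y, y)) _ x :=
    HasFDerivAt.comp (g := f) x (hf (x, x)).hasFDerivAt hδ
  have h1 := h.fst
  have h2 := h.snd
  have he : (fun y : E => (f (y, y)).1) = fun y : E => (f (y, y)).2 := funext hd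
  rw [he] at h1
  exact DFunLike.congr_fun (h1.unique h2) v

theorem lieBracket_of_diagonal_fields_is_diagonal
    {E : Type*} [NormedAddCommGroup E] [NormedSpace ℝ E]
    (ζ ζ' : E × E → E × E)
    (hζ : Differentiable ℝ ζ) (hζ' : Differentiable ℝ ζ')
    (hdζ : ∀ x : E, (ζ (x, x)).1 = (ζ (x, x)).2)
    (hdζ' : ∀ x : E, (ζ' (x, x)).1 = (ζ' (x, x)).2) :
    ∀ x : E, (VectorField.lieBracket ℝ ζ ζ' (x, x)).1
        = (VectorField.lieBracket ℝ ζ ζ' (x, x)).2 := by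
  intro x
  rw [VectorField.lieBracket, Prod.fst_sub, Prod.snd_sub,
    fderiv_diag_aux ζ' hζ' hdζ' x _ (hdζ x), fderiv_diag_aux ζ hζ hdζ x _ (hdζ' x)]
end

section
/- Let E be a real normed vector space, k a natural number, and let ζ, ζ̃, ζ', ζ̃' : E × E → E × E be vector fields of class C^{k+1}, each tangent to the diagonal along the diagonal (the two components of the value at every diagonal point (x,x) are equal). Suppose ζ and ζ̃ have the same k-jet at every diagonal point, i.e. iteratedFDeriv ℝ i ζ (x,x) = iteratedFDeriv ℝ i ζ̃ (x,x) for all x ∈ E and all i ≤ k, and similarly ζ' and ζ̃' have the same k-jet at every diagonal point. Then the Lie brackets [ζ,ζ'] and [ζ̃,ζ̃'] have the same k-jet at every diagonal point: iteratedFDeriv ℝ i [ζ,ζ'] (x,x) = iteratedFDeriv ℝ i [ζ̃,ζ̃'] (x,x) for all x ∈ E and all i ≤ k. -/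
lemma aux_symm {F G : Type*} [NormedAddCommGroup F] [NormedSpace ℝ F]
    [NormedAddCommGroup G] [NormedSpace ℝ G] (f : F → G) (v : F) (i : ℕ) :
    ContDiff ℝ (i + 1) f → ∀ p, iteratedFDeriv ℝ i (fun y => fderiv ℝ f y v) p
      = fderiv ℝ (iteratedFDeriv ℝ i f) p v := by
  induction i with
  | zero =>
    intro hf p
    have hd : Differentiable ℝ f := hf.differentiable (by simp)
    ext m
    have hd0 : DifferentiableAt ℝ (iteratedFDeriv ℝ 0 f) p :=
      (hf.differentiable_iteratedFDeriv (m := 0) (by norm_num)) p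
    have h1 := fderiv_continuousMultilinear_apply_const hd0 m
    simp only [iteratedFDeriv_zero_apply] at h1 ⊢
    have h2 := congrArg (fun L => L v) h1
    simpa using h2
  | succ i ih =>
    intro hf p
    have hf' : ContDiff ℝ (i + 1) f := hf.of_le (by norm_cast; omega)
    have hih := ih hf'
    have hD : ContDiff ℝ 2 (iteratedFDeriv ℝ i f) :=
      hf.iteratedFDeriv_right (by norm_cast; omega)
    have hD1 : ContDiff ℝ 1 (fderiv ℝ (iteratedFDeriv ℝ i f)) :=
      hD.fderiv_right (by norm_num)
    have hdd : DifferentiableAt ℝ (fderiv ℝ (iteratedFDeriv ℝ i f)) p :=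
      hD1.differentiable (by simp) p
    have hsym : IsSymmSndFDerivAt ℝ (iteratedFDeriv ℝ i f) p :=
      hD.contDiffAt.isSymmSndFDerivAt (by simp)
    have hds : DifferentiableAt ℝ (iteratedFDeriv ℝ (i+1) f) p :=
      (hf.differentiable_iteratedFDeriv (m := i + 1) (by norm_cast; omega)) p
    ext m
    rw [iteratedFDeriv_succ_apply_left]
    have e : iteratedFDeriv ℝ i (fun y => fderiv ℝ f y v)
        = fun y => fderiv ℝ (iteratedFDeriv ℝ i f) y v := funext hih
    rw [e]
    have h1 : fderiv ℝ (fun y => fderiv ℝ (iteratedFDeriv ℝ i f) y v) p (m 0)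
        = fderiv ℝ (fderiv ℝ (iteratedFDeriv ℝ i f)) p (m 0) v := by
      rw [fderiv_clm_apply hdd (differentiableAt_const v)]
      simp
    rw [h1, hsym.eq]
    have h2 := congrArg (fun L => L v) (fderiv_continuousMultilinear_apply_const hds m)
    have h3 : (fun y => iteratedFDeriv ℝ (i+1) f y m)
        = fun y => (fderiv ℝ (iteratedFDeriv ℝ i f) y (m 0)) (Fin.tail m) := by
      funext y; rw [iteratedFDeriv_succ_apply_left]
    have hc : DifferentiableAt ℝ (fun y => fderiv ℝ (iteratedFDeriv ℝ i f) y (m 0)) p :=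
      hdd.clm_apply (differentiableAt_const _)
    rw [h3, fderiv_continuousMultilinear_apply_const hc,
      fderiv_clm_apply hdd (differentiableAt_const (m 0))] at h2
    simpa using h2

lemma aux_flat {F G : Type*} [NormedAddCommGroup F] [NormedSpace ℝ F]
    [NormedAddCommGroup G] [NormedSpace ℝ G] (k : ℕ) (A : F → F →L[ℝ] G) (d : F → F)
    (hA : ContDiff ℝ k A) (hd : ContDiff ℝ k d) (p : F) (i : ℕ) (hi : i ≤ k)
    (h0 : ∀ j ≤ i, iteratedFDeriv ℝ j A p = 0 ∨ iteratedFDeriv ℝ (i - j) d p = 0) :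
    iteratedFDeriv ℝ i (fun y => A y (d y)) p = 0 := by
  rw [← norm_le_zero_iff]
  refine (norm_iteratedFDeriv_clm_apply hA hd p (by exact_mod_cast hi)).trans
    (Finset.sum_eq_zero ?_).le
  intro j hj
  rcases h0 j (by simp at hj; omega) with h | h <;> simp [h]

lemma aux_A {E : Type*} [NormedAddCommGroup E] [NormedSpace ℝ E]
    (k : ℕ) (g h : E × E → E × E) (hg : ContDiff ℝ (k + 1) g) (hh : ContDiff ℝ k h)
    (hdh : ∀ x : E, (h (x, x)).1 = (h (x, x)).2)
    (hj : ∀ x : E, ∀ i ≤ k, iteratedFDeriv ℝ i g (x, x) = 0) (x : E) (i : ℕ) (hi : i ≤ k) :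
    iteratedFDeriv ℝ i (fun y => fderiv ℝ g y (h y)) (x, x) = 0 := by
  have hfg : ContDiff ℝ k (fderiv ℝ g) := hg.fderiv_right (by norm_cast)
  have e : (fun y => fderiv ℝ g y (h y))
      = (fun y => fderiv ℝ g y (h y - h (x, x))) + fun y => fderiv ℝ g y (h (x, x)) := by
    funext y; simp
  have hik : (i : WithTop ℕ∞) ≤ k := by exact_mod_cast hi
  have hhs : ContDiff ℝ k (fun y => h y - h (x, x)) := hh.sub contDiff_const
  rw [e, iteratedFDeriv_add_apply ((hfg.clm_apply hhs).of_le hik).contDiffAt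
    ((hfg.clm_apply contDiff_const).of_le hik).contDiffAt]
  rw [aux_flat k (fderiv ℝ g) _ hfg hhs (x, x) i hi, zero_add,
    aux_symm g _ i (hg.of_le (by norm_cast; omega))]
  · have hd : DifferentiableAt ℝ (iteratedFDeriv ℝ i g) (x, x) :=
      (hg.differentiable_iteratedFDeriv (m := i) (by norm_cast; omega)) _
    obtain ⟨w, hw⟩ : ∃ w, h (x, x) = (w, w) := ⟨(h (x, x)).1, Prod.ext rfl (hdh x).symm⟩
    rw [hw]
    have hz : (iteratedFDeriv ℝ i g) ∘ (fun y : E => (y, y)) = fun _ => 0 := by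
      funext y; exact hj y i hi
    have hdiag : HasFDerivAt (fun y : E => (y, y))
        ((ContinuousLinearMap.id ℝ E).prod (ContinuousLinearMap.id ℝ E)) x :=
      (hasFDerivAt_id x).prodMk (hasFDerivAt_id x)
    have hc := HasFDerivAt.comp x (f := fun y : E => (y, y)) hd.hasFDerivAt hdiag
    rw [hz] at hc
    have := congrArg (fun L => L w) (hc.unique (hasFDerivAt_const _ _))
    simpa using this
  · intro j hji
    rcases hji.lt_or_eq with h1 | rfl
    · left
      rw [← norm_eq_zero, norm_iteratedFDeriv_fderiv, norm_eq_zero]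
      exact hj x (j + 1) (by omega)
    · right
      have hz : ∀ n, n = 0 → iteratedFDeriv ℝ n (fun y => h y - h (x, x)) (x, x) = 0 := by
        rintro n rfl
        rw [← norm_eq_zero, norm_iteratedFDeriv_zero, sub_self, norm_zero]
      exact hz _ (Nat.sub_self _)

lemma aux_term {E : Type*} [NormedAddCommGroup E] [NormedSpace ℝ E]
    (k : ℕ) (ζ ζt ζ' ζt' : E × E → E × E)
    (hζ : ContDiff ℝ (k + 1) ζ) (hζt : ContDiff ℝ (k + 1) ζt)
    (hζ' : ContDiff ℝ (k + 1) ζ') (hζt' : ContDiff ℝ (k + 1) ζt')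
    (hdζ : ∀ x : E, (ζ (x, x)).1 = (ζ (x, x)).2)
    (hjζ : ∀ x : E, ∀ i ≤ k, iteratedFDeriv ℝ i ζ (x, x) = iteratedFDeriv ℝ i ζt (x, x))
    (hjζ' : ∀ x : E, ∀ i ≤ k, iteratedFDeriv ℝ i ζ' (x, x) = iteratedFDeriv ℝ i ζt' (x, x))
    (x : E) (i : ℕ) (hi : i ≤ k) :
    iteratedFDeriv ℝ i (fun y => fderiv ℝ ζ' y (ζ y)) (x, x)
      = iteratedFDeriv ℝ i (fun y => fderiv ℝ ζt' y (ζt y)) (x, x) := by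
  have hk : (k : WithTop ℕ∞) ≤ k + 1 := by norm_cast; omega
  have hik : (i : WithTop ℕ∞) ≤ k := by exact_mod_cast hi
  have hflat : ∀ f g : E × E → E × E, ContDiff ℝ (k + 1) f → ContDiff ℝ (k + 1) g →
      (∀ x : E, ∀ i ≤ k, iteratedFDeriv ℝ i f (x, x) = iteratedFDeriv ℝ i g (x, x)) →
      ∀ x : E, ∀ i ≤ k, iteratedFDeriv ℝ i (f - g) (x, x) = 0 := by
    intro f g hf hg hfg x i hi
    have hik : (i : WithTop ℕ∞) ≤ k + 1 := by norm_cast; omega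
    rw [iteratedFDeriv_sub_apply (hf.of_le hik).contDiffAt (hg.of_le hik).contDiffAt,
      hfg x i hi, sub_self]
  have hs' : ContDiff ℝ (k + 1) (ζ' - ζt') := hζ'.sub hζt'
  have hs : ContDiff ℝ (k + 1) (ζ - ζt) := hζ.sub hζt
  have e : (fun y => fderiv ℝ ζ' y (ζ y))
      = ((fun y => fderiv ℝ (ζ' - ζt') y (ζ y)) + fun y => fderiv ℝ ζt' y ((ζ - ζt) y))
        + fun y => fderiv ℝ ζt' y (ζt y) := by
    funext y
    have := fderiv_sub (hζ'.differentiable (by simp) y) (hζt'.differentiable (by simp) y)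
    simp [this]
  have c1 : ContDiff ℝ k (fun y => fderiv ℝ (ζ' - ζt') y (ζ y)) :=
    (hs'.fderiv_right (by norm_cast)).clm_apply (hζ.of_le hk)
  have hft : ContDiff ℝ k (fderiv ℝ ζt') := hζt'.fderiv_right (by norm_cast)
  have c2 : ContDiff ℝ k (fun y => fderiv ℝ ζt' y ((ζ - ζt) y)) := hft.clm_apply (hs.of_le hk)
  have c3 : ContDiff ℝ k (fun y => fderiv ℝ ζt' y (ζt y)) := hft.clm_apply (hζt.of_le hk)
  have c12 : ContDiff ℝ k ((fun y => fderiv ℝ (ζ' - ζt') y (ζ y))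
      + fun y => fderiv ℝ ζt' y ((ζ - ζt) y)) := c1.add c2
  rw [e, iteratedFDeriv_add_apply (c12.of_le hik).contDiffAt (c3.of_le hik).contDiffAt,
    iteratedFDeriv_add_apply (c1.of_le hik).contDiffAt (c2.of_le hik).contDiffAt,
    aux_A k _ ζ hs' (hζ.of_le hk) hdζ (hflat _ _ hζ' hζt' hjζ') x i hi,
    aux_flat k _ _ hft (hs.of_le hk) (x, x) i hi
      (fun j _ => Or.inr (hflat _ _ hζ hζt hjζ x (i - j) (by omega)))]
  simp


theorem lieBracket_diag_jet_determined
    {E : Type*} [NormedAddCommGroup E] [NormedSpace ℝ E]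
    (k : ℕ) (ζ ζt ζ' ζt' : E × E → E × E)
    (hζ : ContDiff ℝ (k + 1) ζ) (hζt : ContDiff ℝ (k + 1) ζt)
    (hζ' : ContDiff ℝ (k + 1) ζ') (hζt' : ContDiff ℝ (k + 1) ζt')
    (hdζ : ∀ x : E, (ζ (x, x)).1 = (ζ (x, x)).2)
    (hdζt : ∀ x : E, (ζt (x, x)).1 = (ζt (x, x)).2)
    (hdζ' : ∀ x : E, (ζ' (x, x)).1 = (ζ' (x, x)).2)
    (hdζt' : ∀ x : E, (ζt' (x, x)).1 = (ζt' (x, x)).2)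
    (hjζ : ∀ x : E, ∀ i ≤ k, iteratedFDeriv ℝ i ζ (x, x) = iteratedFDeriv ℝ i ζt (x, x))
    (hjζ' : ∀ x : E, ∀ i ≤ k, iteratedFDeriv ℝ i ζ' (x, x) = iteratedFDeriv ℝ i ζt' (x, x)) :
    ∀ x : E, ∀ i ≤ k,
      iteratedFDeriv ℝ i (VectorField.lieBracket ℝ ζ ζ') (x, x)
        = iteratedFDeriv ℝ i (VectorField.lieBracket ℝ ζt ζt') (x, x) := by

  intro x i hi
  have hk : (k : WithTop ℕ∞) ≤ k + 1 := by norm_cast; omega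
  have hik : (i : WithTop ℕ∞) ≤ k := by exact_mod_cast hi
  have c : ∀ f g : E × E → E × E, ContDiff ℝ (k + 1) f → ContDiff ℝ (k + 1) g →
      ContDiffAt ℝ i (fun y => fderiv ℝ f y (g y)) (x, x) := fun f g hf hg =>
    (((hf.fderiv_right (m := k) (by norm_cast)).clm_apply (hg.of_le hk)).of_le hik).contDiffAt
  have e : ∀ f g : E × E → E × E, VectorField.lieBracket ℝ f g
      = (fun y => fderiv ℝ g y (f y)) - fun y => fderiv ℝ f y (g y) := fun f g => rfl
  rw [e, e, iteratedFDeriv_sub_apply (c _ _ hζ' hζ) (c _ _ hζ hζ'),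
    iteratedFDeriv_sub_apply (c _ _ hζt' hζt) (c _ _ hζt hζt'),
    aux_term k ζ ζt ζ' ζt' hζ hζt hζ' hζt' hdζ hjζ hjζ' x i hi,
    aux_term k ζ' ζt' ζ ζt hζ' hζt' hζ hζt hdζ' hjζ' hjζ x i hi]
end

section
/- Let E and F be real normed vector spaces, f : E → F a C² map, and ξ, η : E → E differentiable vector fields. Define g : E → F by g(y) = (fderiv f y)(ξ y) and h : E → F by h(y) = (fderiv f y)(η y). If at a point x ∈ E one has fderiv g x = 0 and fderiv h x = 0 (first-order tangency of ξ and η to the level set of f at x), then (fderiv f x)([ξ,η](x)) = 0, i.e. the bracket [ξ,η] is tangent (to order zero) at x. -/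
theorem first_order_tangency_implies_bracket_tangency
    {E : Type*} [NormedAddCommGroup E] [NormedSpace ℝ E]
    {F : Type*} [NormedAddCommGroup F] [NormedSpace ℝ F]
    (f : E → F) (hf : ContDiff ℝ 2 f)
    (ξ η : E → E) (hξ : Differentiable ℝ ξ) (hη : Differentiable ℝ η)
    (x : E)
    (hg : fderiv ℝ (fun y => fderiv ℝ f y (ξ y)) x = 0)
    (hh : fderiv ℝ (fun y => fderiv ℝ f y (η y)) x = 0) :
    fderiv ℝ f x (VectorField.lieBracket ℝ ξ η x) = 0 := by
  rw [VectorField.fderiv_apply_lieBracket (n := 2) hf.contDiffAt (by simp) (hη x) (hξ x), hg, hh]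
  simp
end
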